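/- arXiv:2108.12487 — 2 statements merged into one kernel-verified Lean document; each statement's English description precedes it below -/
import Mathlib

section
/- Let x : ℕ → ℝ be a sequence of positive real numbers, let s_n = x_0 + ⋯ + x_n with s_{−1} = 0, let g_n ∈ SL(2,ℝ) be the matrix [[(s_{n−1}+s_n)/(s_n−s_{n−1}), −2·s_{n−1}·s_n/(s_n−s_{n−1})], [−2/(s_n−s_{n−1}), (s_{n−1}+s_n)/(s_n−s_{n−1})]], and let Γ_x be the subgroup of SL(2,ℝ) generated by {g_n : n ∈ ℕ}. Then Γ_x acts properly discontinuously on the upper half-plane ℍ: for all compact subsets K, L ⊆ ℍ, the set {γ ∈ Γ_x : (γ·K) ∩ L ≠ ∅} is finite. -/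
/-- Partial sums of `x`: `sPartial x n = x 0 + ⋯ + x (n-1)`.  Thus
`sPartial x 0 = 0` realizes the convention `s_{-1} = 0`, and for `n ∈ ℕ`,
`s_n = sPartial x (n+1)` and `s_{n-1} = sPartial x n`. -/
noncomputable def sPartial (x : ℕ → ℝ) (n : ℕ) : ℝ := ∑ i ∈ Finset.range n, x i

/-- The matrix `g_n` of the paper, where `s_{n-1} = sPartial x n` and
`s_n = sPartial x (n+1)`:
`[[(s_{n−1}+s_n)/(s_n−s_{n−1}), −2·s_{n−1}·s_n/(s_n−s_{n−1})],
  [−2/(s_n−s_{n−1}), (s_{n−1}+s_n)/(s_n−s_{n−1})]]`. -/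
noncomputable def gMat (x : ℕ → ℝ) (n : ℕ) : Matrix (Fin 2) (Fin 2) ℝ :=
  !![(sPartial x n + sPartial x (n + 1)) / (sPartial x (n + 1) - sPartial x n),
      -2 * sPartial x n * sPartial x (n + 1) / (sPartial x (n + 1) - sPartial x n);
      -2 / (sPartial x (n + 1) - sPartial x n),
      (sPartial x n + sPartial x (n + 1)) / (sPartial x (n + 1) - sPartial x n)]

open scoped MatrixGroups Topology

lemma sP_succ (x : ℕ → ℝ) (n : ℕ) : sPartial x (n + 1) = sPartial x n + x n := by
  simp [sPartial, Finset.sum_range_succ]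

lemma sP_mono (x : ℕ → ℝ) (hx : ∀ n, 0 < x n) : Monotone (sPartial x) :=
  monotone_nat_of_le_succ fun n => by rw [sP_succ]; linarith [hx n]

lemma sP_nonneg (x : ℕ → ℝ) (hx : ∀ n, 0 < x n) (n : ℕ) : 0 ≤ sPartial x n :=
  Finset.sum_nonneg fun i _ => (hx i).le

noncomputable def gSL (x : ℕ → ℝ) (hx : ∀ n, 0 < x n) (n : ℕ) : SL(2, ℝ) :=
  ⟨gMat x n, by
    have h := (hx n).ne'
    have e : sPartial x (n + 1) - sPartial x n = x n := by rw [sP_succ]; ring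
    rw [gMat, Matrix.det_fin_two_of, e, sP_succ]
    field_simp
    ring⟩

noncomputable def cen (x : ℕ → ℝ) (a : ℕ × Bool) : ℝ :=
  cond a.2 (-(sPartial x a.1 + x a.1 / 2)) (sPartial x a.1 + x a.1 / 2)

noncomputable def letter (x : ℕ → ℝ) (hx : ∀ n, 0 < x n) (a : ℕ × Bool) : SL(2, ℝ) :=
  cond a.2 (gSL x hx a.1) (gSL x hx a.1)⁻¹

lemma cen_sep (x : ℕ → ℝ) (hx : ∀ n, 0 < x n) (a b : ℕ × Bool) (h : a ≠ b) :
    x a.1 / 2 + x b.1 / 2 ≤ |cen x a - cen x b| := by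
  obtain ⟨n, s⟩ := a
  obtain ⟨m, t⟩ := b
  have hn := sP_nonneg x hx n
  have hm := sP_nonneg x hx m
  have hxn := hx n
  have hxm := hx m
  have key : s = t → (sPartial x n + x n ≤ sPartial x m ∨ sPartial x m + x m ≤ sPartial x n) := by
    intro hst
    have hne : n ≠ m := by rintro rfl; exact h (by rw [hst])
    rcases lt_or_gt_of_ne hne with h' | h'
    · left; rw [← sP_succ]; exact sP_mono x hx h'
    · right; rw [← sP_succ]; exact sP_mono x hx h'
  rw [le_abs]
  cases s <;> cases t <;> simp only [cen, cond_true, cond_false]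
  · rcases key rfl with h | h
    · right; linarith
    · left; linarith
  · left; linarith
  · right; linarith
  · rcases key rfl with h | h
    · left; linarith
    · right; linarith

lemma letter_true (x : ℕ → ℝ) (hx : ∀ n, 0 < x n) (n : ℕ) :
    (letter x hx (n, true) : Matrix (Fin 2) (Fin 2) ℝ) =
      !![(2 * sPartial x n + x n) / x n, -2 * sPartial x n * (sPartial x n + x n) / x n;
        -2 / x n, (2 * sPartial x n + x n) / x n] := by
  have e : sPartial x n + x n - sPartial x n = x n := by ring
  have e2 : sPartial x n + (sPartial x n + x n) = 2 * sPartial x n + x n := by ring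
  change gMat x n = _
  rw [gMat, sP_succ, e, e2]

lemma letter_false (x : ℕ → ℝ) (hx : ∀ n, 0 < x n) (n : ℕ) :
    (letter x hx (n, false) : Matrix (Fin 2) (Fin 2) ℝ) =
      !![(2 * sPartial x n + x n) / x n, 2 * sPartial x n * (sPartial x n + x n) / x n;
        2 / x n, (2 * sPartial x n + x n) / x n] := by
  have h := letter_true x hx n
  have h2 : letter x hx (n, false) = (letter x hx (n, true))⁻¹ := rfl
  rw [h2, Matrix.SpecialLinearGroup.coe_inv, h, Matrix.adjugate_fin_two_of]
  congr! 3 <;> ring_nf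

lemma letter_formula (x : ℕ → ℝ) (hx : ∀ n, 0 < x n) (n : ℕ) (b : Bool) (z : UpperHalfPlane) :
    ‖((letter x hx (n, b) • z : UpperHalfPlane) : ℂ) - cen x (n, b)‖
      * ‖(z : ℂ) - cen x (n, !b)‖ = (x n / 2) ^ 2 := by
  have h : (x n : ℂ) ≠ 0 := by exact_mod_cast (hx n).ne'
  have e : sPartial x (n + 1) - sPartial x n = x n := by rw [sP_succ]; ring
  have hz : (z : ℂ) - cen x (n, !b) ≠ 0 := by
    intro h0
    have := congrArg Complex.im h0
    simp at this
    exact z.im_pos.ne' this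
  rw [← norm_mul]
  have hr : ‖((x n / 2 : ℝ) : ℂ)^2‖ = (x n / 2)^2 := by
    rw [norm_pow, Complex.norm_real, Real.norm_eq_abs, sq_abs]
  rw [← hr, UpperHalfPlane.coe_specialLinearGroup_apply]
  cases b
  · have hz' : (z : ℂ) + (sPartial x n + x n / 2) ≠ 0 := by
      simpa [cen, sub_eq_add_neg] using hz
    have hz2 : (x n : ℂ) + 2 * sPartial x n + 2 * z ≠ 0 := by
      intro h0; apply hz'; linear_combination h0 / 2
    rw [← norm_neg]
    congr 1
    rw [letter_false]
    simp [cen]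
    have : (2 / (x n:ℂ) * z + (2 * sPartial x n + x n) / x n) =
      (x n + 2 * sPartial x n + 2 * z) / x n := by field_simp; ring
    rw [this]
    field_simp
    ring
  · have hz' : (z : ℂ) - (sPartial x n + x n / 2) ≠ 0 := by
      simpa [cen] using hz
    have hz2 : (x n : ℂ) + 2 * sPartial x n - 2 * z ≠ 0 := by
      intro h0; apply hz'; linear_combination -h0 / 2
    rw [← norm_neg]
    congr 1
    rw [letter_true]
    simp [cen]
    have : (-2 / (x n:ℂ) * z + (2 * sPartial x n + x n) / x n) =
      (x n + 2 * sPartial x n - 2 * z) / x n := by field_simp; ring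
    rw [this]
    field_simp
    ring

lemma letter_maps (x : ℕ → ℝ) (hx : ∀ n, 0 < x n) (n : ℕ) (b : Bool) (z : UpperHalfPlane)
    (hz : x n / 2 < ‖(z : ℂ) - cen x (n, !b)‖) :
    ‖((letter x hx (n, b) • z : UpperHalfPlane) : ℂ) - cen x (n, b)‖ < x n / 2 := by
  have := letter_formula x hx n b z
  have h0 := hx n
  by_contra! hc
  nlinarith

lemma word_maps (x : ℕ → ℝ) (hx : ∀ n, 0 < x n) (z : UpperHalfPlane)
    (hz : ∀ a : ℕ × Bool, x a.1 / 2 < ‖(z : ℂ) - cen x a‖) (L : List (ℕ × Bool)) :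
    ∀ a, FreeGroup.IsReduced (a :: L) →
    ‖((((a :: L).map (letter x hx)).prod • z : UpperHalfPlane) : ℂ) - cen x a‖ < x a.1 / 2 := by
  induction L with
  | nil =>
    rintro ⟨n, b⟩ -
    simpa using letter_maps x hx n b z (hz (n, !b))
  | cons c L ih =>
    rintro ⟨n, b⟩ h
    rw [FreeGroup.isReduced_cons_cons] at h
    have h1 := ih c h.2
    rw [List.map_cons, List.prod_cons, mul_smul]
    apply letter_maps
    have hne : c ≠ (n, !b) := by
      rintro rfl
      simpa using h.1 rfl
    have h2 := cen_sep x hx c (n, !b) hne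
    set w := (((c :: L).map (letter x hx)).prod • z : UpperHalfPlane)
    have h3 : |cen x c - cen x (n, !b)| = ‖((w : ℂ) - cen x (n, !b)) - (w - cen x c)‖ := by
      rw [← Real.norm_eq_abs, ← Complex.norm_real]
      push_cast
      congr 1
      ring
    have h4 := norm_sub_le ((w : ℂ) - cen x (n, !b)) (w - cen x c)
    simp only at h2
    linarith

lemma out_of (x : ℕ → ℝ) (hx : ∀ n, 0 < x n) (z : UpperHalfPlane)
    (h1 : |z.re| < x 0) (h2 : |z.re| * x 0 < 1 / 4) (h3 : 1 / 2 < z.im) (a : ℕ × Bool) :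
    x a.1 / 2 < ‖(z : ℂ) - cen x a‖ := by
  obtain ⟨n, b⟩ := a
  have hxn := hx n
  have key : ∀ u : ℝ, |u| = |z.re| → (x n / 2)^2 < (u - (sPartial x n + x n / 2))^2 + z.im^2 := by
    intro u hu
    rw [← hu] at h1 h2
    have hle := le_abs_self u
    have hv : 1 / 4 < z.im ^ 2 := by nlinarith
    rcases n with _ | n
    · simp only [sPartial, Finset.range_zero, Finset.sum_empty]
      nlinarith [sq_nonneg u]
    · have : x 0 ≤ sPartial x (n + 1) := by
        have := sP_mono x hx (show 1 ≤ n + 1 by omega)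
        simpa [sPartial] using this
      have : 0 < (sPartial x (n+1) - u) * (sPartial x (n+1) + x (n+1) - u) := by
        apply mul_pos <;> linarith
      nlinarith
  apply lt_of_pow_lt_pow_left₀ 2 (norm_nonneg _)
  rw [← Complex.normSq_eq_norm_sq, Complex.normSq_apply]
  cases b
  · have := key z.re rfl
    simp [cen]
    linarith
  · have := key (-z.re) (abs_neg _)
    simp [cen]
    nlinarith

/-- `Γ_x` acts properly discontinuously on the upper half-plane:
for all compact `K, L ⊆ ℍ`, the set of `γ ∈ Γ_x` with `(γ·K) ∩ L ≠ ∅` is finite. -/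
theorem stmt9 (x : ℕ → ℝ) (hx : ∀ n, 0 < x n)
    (Γ : Subgroup (Matrix.SpecialLinearGroup (Fin 2) ℝ))
    (hΓ : Γ = Subgroup.closure
      {g : Matrix.SpecialLinearGroup (Fin 2) ℝ |
        ∃ n : ℕ, (g : Matrix (Fin 2) (Fin 2) ℝ) = gMat x n}) :
    ∀ K L : Set UpperHalfPlane, IsCompact K → IsCompact L →
      {γ : Matrix.SpecialLinearGroup (Fin 2) ℝ |
        γ ∈ Γ ∧ ((fun z => γ • z) '' K ∩ L).Nonempty}.Finite := by
  classical
  have hgen : {g : Matrix.SpecialLinearGroup (Fin 2) ℝ |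
      ∃ n : ℕ, (g : Matrix (Fin 2) (Fin 2) ℝ) = gMat x n} = Set.range (gSL x hx) := by
    ext g
    constructor
    · rintro ⟨n, hn⟩
      exact ⟨n, Subtype.ext hn.symm⟩
    · rintro ⟨n, rfl⟩
      exact ⟨n, rfl⟩
  rw [hgen, ← FreeGroup.range_lift_eq_closure] at hΓ
  have hx0 := hx 0
  let U : Set UpperHalfPlane := {z | |z.re| < x 0 ∧ |z.re| * x 0 < 1 / 4 ∧ 1 / 2 < z.im}
  have hU : IsOpen U := by
    have c1 : Continuous fun z : UpperHalfPlane => |z.re| := UpperHalfPlane.continuous_re.abs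
    exact (isOpen_lt c1 continuous_const).inter
      ((isOpen_lt (c1.mul continuous_const) continuous_const).inter
        (isOpen_lt continuous_const UpperHalfPlane.continuous_im))
  have hI : UpperHalfPlane.I ∈ U := by
    refine ⟨?_, ?_, ?_⟩ <;> norm_num [hx0]
  have hdisc : ∀ γ ∈ Γ, γ • UpperHalfPlane.I ∈ U → γ = 1 := by
    intro γ hγ hγU
    rw [hΓ] at hγ
    obtain ⟨w, rfl⟩ := hγ
    have hw : w = FreeGroup.mk w.toWord := FreeGroup.mk_toWord.symm
    have hred : FreeGroup.IsReduced w.toWord := FreeGroup.isReduced_toWord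
    generalize w.toWord = L at hw hred
    subst hw
    have hl : FreeGroup.lift (gSL x hx) (FreeGroup.mk L) = (L.map (letter x hx)).prod := by
      rw [FreeGroup.lift_mk]; rfl
    rw [hl] at hγU ⊢
    rcases L with _ | ⟨a, L⟩
    · simp
    · exfalso
      have h1 := word_maps x hx UpperHalfPlane.I
        (out_of x hx _ hI.1 hI.2.1 hI.2.2) L a hred
      have h2 := out_of x hx _ hγU.1 hγU.2.1 hγU.2.2 a
      linarith
  have hD : DiscreteTopology Γ := by
    apply discreteTopology_of_isOpen_singleton_one
    have hc : Continuous fun γ : Γ => (γ : SL(2, ℝ)) • UpperHalfPlane.I := by fun_prop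
    have := hU.preimage hc
    convert this using 1
    ext γ
    simp only [Set.mem_singleton_iff, Set.mem_preimage]
    constructor
    · rintro rfl; simpa using hI
    · intro h; exact Subtype.ext (hdisc γ γ.2 h)
  intro K L hK hL
  have hfin := ProperlyDiscontinuousSMul.finite_disjoint_inter_image (Γ := Γ) hK hL
  refine (hfin.image Subtype.val).subset ?_
  rintro γ ⟨hγ, hne⟩
  refine ⟨⟨γ, hγ⟩, ?_, rfl⟩
  simpa [Set.nonempty_iff_ne_empty] using hne
end

section
/- Let a, b, c, d, e : ℤ → ℝ satisfy a_n < b_n < c_n < d_n < e_n and e_n ≤ a_{n+1} for all n ∈ ℤ. For reals u < v < w < x define T(u,v,w,x) = (1/√(r·r'))·[[O', −(O·O' + r·r')], [1, −O]] ∈ SL(2,ℝ), where O = (u+v)/2, r = (v−u)/2, O' = (w+x)/2, r' = (x−w)/2, and set f_n = T(a_n, b_n, c_n, d_n), g_n = T(b_n, c_n, d_n, e_n), and let G be the subgroup of SL(2,ℝ) generated by {f_n, g_n : n ∈ ℤ}. Then G acts freely modulo center on the upper half-plane ℍ: if γ ∈ G and z ∈ ℍ satisfy γ·z = z, then γ =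 I or γ = −I. -/
/-- For reals `u < v < w < x`, the matrix
`T(u,v,w,x) = (1/√(r·r'))·[[O', −(O·O' + r·r')], [1, −O]]`, where `O = (u+v)/2`,
`r = (v−u)/2`, `O' = (w+x)/2`, `r' = (x−w)/2`. -/
noncomputable def TMat (u v w x : ℝ) : Matrix (Fin 2) (Fin 2) ℝ :=
  (1 / Real.sqrt (((v - u) / 2) * ((x - w) / 2))) •
    !![(w + x) / 2,
        -(((u + v) / 2) * ((w + x) / 2) + ((v - u) / 2) * ((x - w) / 2));
        1, -((u + v) / 2)]

open Matrix in
/-- `M` maps the real set `A` into `B` without meeting a pole. -/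
def MapsR (M : SpecialLinearGroup (Fin 2) ℝ) (A B : Set ℝ) : Prop :=
  ∀ x ∈ A, M.1 1 0 * x + M.1 1 1 ≠ 0 ∧
    (M.1 0 0 * x + M.1 0 1) / (M.1 1 0 * x + M.1 1 1) ∈ B

theorem MapsR.mul {M N : Matrix.SpecialLinearGroup (Fin 2) ℝ} {A B C : Set ℝ}
    (hM : MapsR M B C) (hN : MapsR N A B) : MapsR (M * N) A C := by
  intro x hx
  obtain ⟨h1, h2⟩ := hN x hx
  obtain ⟨h3, h4⟩ := hM _ h2
  have e1 : (M * N).1 1 0 * x + (M * N).1 1 1 =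
      (M.1 1 0 * ((N.1 0 0 * x + N.1 0 1) / (N.1 1 0 * x + N.1 1 1)) + M.1 1 1) *
        (N.1 1 0 * x + N.1 1 1) := by
    simp only [Matrix.SpecialLinearGroup.coe_mul, Matrix.mul_apply, Fin.sum_univ_two]
    field_simp
    ring
  have e2 : (M * N).1 0 0 * x + (M * N).1 0 1 =
      (M.1 0 0 * ((N.1 0 0 * x + N.1 0 1) / (N.1 1 0 * x + N.1 1 1)) + M.1 0 1) *
        (N.1 1 0 * x + N.1 1 1) := by
    simp only [Matrix.SpecialLinearGroup.coe_mul, Matrix.mul_apply, Fin.sum_univ_two]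
    field_simp
    ring
  rw [e1, e2]
  refine ⟨mul_ne_zero h3 h1, ?_⟩
  rw [mul_div_mul_right _ _ h1]
  exact h4

theorem base_maps (k u v w x y : ℝ) (hk : k ≠ 0) (huv : u < v) (hwx : w < x)
    (hy : y ≤ u ∨ v ≤ y) :
    k * y + -(k * ((u + v) / 2)) ≠ 0 ∧
    (k * ((w + x) / 2) * y +
      -(k * (((u + v) / 2) * ((w + x) / 2) + ((v - u) / 2) * ((x - w) / 2)))) /
      (k * y + -(k * ((u + v) / 2))) ∈ Set.Icc w x := by
  have hne : y - (u + v) / 2 ≠ 0 := by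
    rcases hy with hy | hy
    · have : y - (u + v) / 2 < 0 := by linarith
      exact this.ne
    · have : 0 < y - (u + v) / 2 := by linarith
      exact this.ne'
  have e : k * y + -(k * ((u + v) / 2)) = k * (y - (u + v) / 2) := by ring
  have e2 : (k * ((w + x) / 2) * y +
      -(k * (((u + v) / 2) * ((w + x) / 2) + ((v - u) / 2) * ((x - w) / 2)))) =
      k * ((w + x) / 2 * (y - (u + v) / 2) - ((v - u) / 2) * ((x - w) / 2)) := by ring
  rw [e, e2]
  refine ⟨mul_ne_zero hk hne, ?_⟩
  rw [mul_div_mul_left _ _ hk]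
  rcases hy with hy | hy
  · have h0 : y - (u + v) / 2 < 0 := by linarith
    constructor
    · rw [le_div_iff_of_neg h0]; nlinarith
    · rw [div_le_iff_of_neg h0]; nlinarith
  · have h0 : 0 < y - (u + v) / 2 := by linarith
    constructor
    · rw [le_div_iff₀ h0]; nlinarith
    · rw [div_le_iff₀ h0]; nlinarith

theorem TMat_det (u v w x : ℝ) (huv : u < v) (hwx : w < x) : (TMat u v w x).det = 1 := by
  have hp : 0 < ((v - u) / 2) * ((x - w) / 2) := by
    apply mul_pos <;> linarith
  have hs := Real.sq_sqrt hp.le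
  have hs0 := (Real.sqrt_pos.2 hp).ne'
  rw [Matrix.det_fin_two]
  simp only [TMat, Matrix.smul_apply, Matrix.of_apply, Matrix.cons_val_zero, Matrix.cons_val_one,
    Matrix.cons_val', smul_eq_mul, Matrix.cons_val_fin_one]
  generalize Real.sqrt (((v - u) / 2) * ((x - w) / 2)) = s at *
  have : 1 / s * ((w + x) / 2) * (1 / s * -((u + v) / 2)) -
      1 / s * -(((u + v) / 2) * ((w + x) / 2) + ((v - u) / 2) * ((x - w) / 2)) * (1 / s * 1)
      = (((v - u) / 2) * ((x - w) / 2)) / s ^ 2 := by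
    field_simp
    ring
  rw [this, hs, div_self hp.ne']

theorem T_maps (M : Matrix.SpecialLinearGroup (Fin 2) ℝ) (u v w x : ℝ) (huv : u < v) (hwx : w < x)
    (hM : M.1 = TMat u v w x) (A : Set ℝ) (hA : ∀ y ∈ A, y ≤ u ∨ v ≤ y) :
    MapsR M A (Set.Icc w x) := by
  have hp : 0 < ((v - u) / 2) * ((x - w) / 2) := by
    apply mul_pos <;> linarith
  have hk : 1 / Real.sqrt (((v - u) / 2) * ((x - w) / 2)) ≠ 0 :=
    (one_div_pos.2 (Real.sqrt_pos.2 hp)).ne'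
  intro y hy
  have := base_maps _ u v w x y hk huv hwx (hA y hy)
  rw [hM]
  simpa [TMat, -neg_add_rev] using this

theorem T_maps_inv (M : Matrix.SpecialLinearGroup (Fin 2) ℝ) (u v w x : ℝ) (huv : u < v)
    (hwx : w < x)
    (hM : M.1 = TMat u v w x) (A : Set ℝ) (hA : ∀ y ∈ A, y ≤ w ∨ x ≤ y) :
    MapsR M⁻¹ A (Set.Icc u v) := by
  have hp : 0 < ((v - u) / 2) * ((x - w) / 2) := by
    apply mul_pos <;> linarith
  have hk : -(1 / Real.sqrt (((v - u) / 2) * ((x - w) / 2))) ≠ 0 :=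
    neg_ne_zero.2 (one_div_pos.2 (Real.sqrt_pos.2 hp)).ne'
  intro y hy
  have := base_maps _ w x u v y hk hwx huv (hA y hy)
  have e00 : (M⁻¹).1 0 0 = M.1 1 1 := by
    rw [Matrix.SpecialLinearGroup.SL2_inv_expl]; rfl
  have e01 : (M⁻¹).1 0 1 = -M.1 0 1 := by
    rw [Matrix.SpecialLinearGroup.SL2_inv_expl]; rfl
  have e10 : (M⁻¹).1 1 0 = -M.1 1 0 := by
    rw [Matrix.SpecialLinearGroup.SL2_inv_expl]; rfl
  have e11 : (M⁻¹).1 1 1 = M.1 0 0 := by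
    rw [Matrix.SpecialLinearGroup.SL2_inv_expl]; rfl
  rw [e00, e01, e10, e11, hM]
  generalize hK : 1 / Real.sqrt (((v - u) / 2) * ((x - w) / 2)) = K at *
  have t00 : TMat u v w x 0 0 = K * ((w + x) / 2) := by rw [← hK]; simp [TMat]
  have t01 : TMat u v w x 0 1 =
      K * -(((u + v) / 2) * ((w + x) / 2) + ((v - u) / 2) * ((x - w) / 2)) := by
    rw [← hK]; simp [TMat]
  have t10 : TMat u v w x 1 0 = K := by rw [← hK]; simp [TMat]
  have t11 : TMat u v w x 1 1 = K * -((u + v) / 2) := by rw [← hK]; simp [TMat]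
  rw [t00, t01, t10, t11]
  convert this using 2 <;> ring_nf

theorem word_maps_s15 {ι : Type*} (F : ι → Matrix.SpecialLinearGroup (Fin 2) ℝ)
    (I : ι × Bool → Set ℝ)
    (hF : ∀ s t : ι × Bool, (s.1 = t.1 → s.2 = t.2) →
      MapsR (cond s.2 (F s.1) (F s.1)⁻¹) (I t) (I s)) (p : ι × Bool) :
    ∀ (L : List (ι × Bool)) (s : ι × Bool), FreeGroup.IsReduced (s :: L ++ [p]) →
      MapsR (((s :: L).map fun x => cond x.2 (F x.1) (F x.1)⁻¹).prod) (I p) (I s) := by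
  intro L
  induction L with
  | nil =>
    intro s hs
    simp [FreeGroup.IsReduced] at hs
    simpa using hF s p hs
  | cons t L ih =>
    intro s hs
    simp only [FreeGroup.IsReduced, List.cons_append, List.isChain_cons_cons] at hs
    rw [List.map_cons, List.prod_cons]
    exact (hF s t hs.1).mul (ih t (by simpa [FreeGroup.IsReduced] using hs.2))

theorem trace_of_maps (M : Matrix.SpecialLinearGroup (Fin 2) ℝ) (l r : ℝ) (hlr : l ≤ r)
    (hM : MapsR M (Set.Icc l r) (Set.Icc l r)) : 4 ≤ M.1.trace ^ 2 := by
  obtain ⟨x, hx, hfix⟩ := exists_mem_Icc_isFixedPt_of_mapsTo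
    (f := fun x => (M.1 0 0 * x + M.1 0 1) / (M.1 1 0 * x + M.1 1 1)) (a := l) (b := r)
    (by
      apply ContinuousOn.div (by fun_prop) (by fun_prop)
      intro x hx
      exact (hM x hx).1) hlr (fun x hx => (hM x hx).2)
  have h0 := (hM x hx).1
  have h1 : (M.1 0 0 * x + M.1 0 1) / (M.1 1 0 * x + M.1 1 1) = x := hfix
  rw [div_eq_iff h0] at h1
  have hd := M.2
  rw [Matrix.det_fin_two] at hd
  rw [Matrix.trace_fin_two]
  have key : (M.1 0 0 + M.1 1 1) ^ 2 - 4 = (2 * M.1 1 0 * x + M.1 1 1 - M.1 0 0) ^ 2 := by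
    linear_combination 4 * hd + 4 * M.1 1 0 * h1
  nlinarith [sq_nonneg (2 * M.1 1 0 * x + M.1 1 1 - M.1 0 0)]

theorem fix_of_trace (M : Matrix.SpecialLinearGroup (Fin 2) ℝ) (hM : 4 ≤ M.1.trace ^ 2)
    (z : UpperHalfPlane) (hz : M • z = z) : M.1 = 1 ∨ M.1 = -1 := by
  have h1 := congrArg (fun w : UpperHalfPlane => (w : ℂ)) hz
  simp only [UpperHalfPlane.coe_specialLinearGroup_apply] at h1
  have hd := M.2
  rw [Matrix.det_fin_two] at hd
  rw [Matrix.trace_fin_two] at hM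
  have hy := z.im_pos
  have hne : ((algebraMap ℝ ℝ (M 1 0) : ℂ) * z + (algebraMap ℝ ℝ (M 1 1) : ℂ)) ≠ 0 := by
    intro h0
    rw [h0, div_zero] at h1
    have := congrArg Complex.im h1
    simp at this
    exact hy.ne this
  rw [div_eq_iff hne] at h1
  have hre := congrArg Complex.re h1
  have him := congrArg Complex.im h1
  simp at hre him
  generalize z.re = x at *
  generalize z.im = y at *
  have eA : ∀ i j, M i j = M.1 i j := fun _ _ => rfl
  simp only [eA] at *
  generalize hα : M.1 0 0 = α at *
  generalize hβ : M.1 0 1 = β at *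
  generalize hγ : M.1 1 0 = γ at *
  generalize hδ : M.1 1 1 = δ at *
  have k1 : α = 2 * γ * x + δ := by
    have : y * (α - (2 * γ * x + δ)) = 0 := by linarith
    rcases mul_eq_zero.1 this with h | h
    · exact absurd h hy.ne'
    · linarith
  have k2 : β = -γ * (x ^ 2 + y ^ 2) := by
    subst k1; linarith
  have k3 : γ = 0 := by
    subst k1 k2
    have : (γ * y) ^ 2 ≤ 0 := by nlinarith
    have : γ * y = 0 := by nlinarith
    rcases mul_eq_zero.1 this with h | h
    · exact h
    · exact absurd h hy.ne'
  subst k3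
  have hb : β = 0 := by simpa using k2
  have ha : α = δ := by simpa using k1
  subst hb ha
  have : (α - 1) * (α + 1) = 0 := by linarith
  rcases mul_eq_zero.1 this with h | h
  · left
    ext i j
    fin_cases i <;> fin_cases j <;> simp [hα, hβ, hγ, hδ] <;> linarith
  · right
    ext i j
    fin_cases i <;> fin_cases j <;> simp [hα, hβ, hγ, hδ] <;> linarith

theorem trace_conj (M N : Matrix.SpecialLinearGroup (Fin 2) ℝ) :
    (N * M * N⁻¹).1.trace = M.1.trace := by
  have : (N * M * N⁻¹).1 = N.1 * M.1 * (N⁻¹).1 := by simp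
  rw [this, Matrix.trace_mul_cycle]
  have : (N⁻¹).1 * N.1 = 1 := by
    have h := congrArg Subtype.val (inv_mul_cancel N)
    rw [Matrix.SpecialLinearGroup.coe_mul] at h
    simpa using h
  rw [this, one_mul]

theorem trace_lift {ι : Type*} (F : ι → Matrix.SpecialLinearGroup (Fin 2) ℝ)
    (lo hi : ι × Bool → ℝ) (hlh : ∀ s, lo s ≤ hi s)
    (hF : ∀ s t : ι × Bool, (s.1 = t.1 → s.2 = t.2) →
      MapsR (cond s.2 (F s.1) (F s.1)⁻¹) (Set.Icc (lo t) (hi t)) (Set.Icc (lo s) (hi s)))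
    (w : FreeGroup ι) : 4 ≤ (FreeGroup.lift F w).1.trace ^ 2 := by
  classical
  have h1 := FreeGroup.reduceCyclically.conj_conjugator_reduceCyclically w.toWord
  have h2 : FreeGroup.IsCyclicallyReduced (FreeGroup.reduceCyclically w.toWord) :=
    FreeGroup.reduceCyclically.isCyclicallyReduced FreeGroup.isReduced_toWord
  have h3 : w = FreeGroup.mk (FreeGroup.reduceCyclically.conjugator w.toWord) *
      FreeGroup.mk (FreeGroup.reduceCyclically w.toWord) *
      (FreeGroup.mk (FreeGroup.reduceCyclically.conjugator w.toWord))⁻¹ := by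
    rw [FreeGroup.inv_mk, FreeGroup.mul_mk, FreeGroup.mul_mk, h1, FreeGroup.mk_toWord]
  rw [h3, map_mul, map_mul, map_inv, trace_conj, FreeGroup.lift_mk]
  generalize FreeGroup.reduceCyclically w.toWord = L at h2
  cases L with
  | nil => norm_num [Matrix.trace_fin_two]
  | cons s L =>
    apply trace_of_maps _ (lo s) (hi s) (hlh s)
    apply word_maps_s15 F (fun s => Set.Icc (lo s) (hi s)) hF s L s
    obtain ⟨ha, hb⟩ := h2
    unfold FreeGroup.IsReduced at ha ⊢
    rw [List.isChain_append]
    refine ⟨ha, by simp, ?_⟩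
    intro x hx y hy
    simp at hy
    subst hy
    exact hb x hx _ (by simp)

/-- left end points -/
def loF (a b c d : ℤ → ℝ) : (ℤ × Bool) × Bool → ℝ
  | ((n, true), false) => a n
  | ((n, true), true) => c n
  | ((n, false), false) => b n
  | ((n, false), true) => d n

/-- the group `G` generated by the `f_n` and `g_n` acts freely
modulo center on the upper half-plane: if `γ ∈ G` fixes a point of `ℍ`, then
`γ = I` or `γ = −I`. -/
theorem stmt15 (a b c d e : ℤ → ℝ)
    (h : ∀ n : ℤ, a n < b n ∧ b n < c n ∧ c n < d n ∧ d n < e n ∧ e n ≤ a (n + 1))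
    (G : Subgroup (Matrix.SpecialLinearGroup (Fin 2) ℝ))
    (hG : G = Subgroup.closure
      {g : Matrix.SpecialLinearGroup (Fin 2) ℝ | ∃ n : ℤ,
        (g : Matrix (Fin 2) (Fin 2) ℝ) = TMat (a n) (b n) (c n) (d n) ∨
        (g : Matrix (Fin 2) (Fin 2) ℝ) = TMat (b n) (c n) (d n) (e n)}) :
    ∀ γ : Matrix.SpecialLinearGroup (Fin 2) ℝ, γ ∈ G →
      ∀ z : UpperHalfPlane, γ • z = z →
        (γ : Matrix (Fin 2) (Fin 2) ℝ) = 1 ∨ (γ : Matrix (Fin 2) (Fin 2) ℝ) = -1 := by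
  subst hG
  have hmono : ∀ m n : ℤ, m < n → e m ≤ a n := by
    intro m n hmn
    have hst : ∀ k : ℕ, e m ≤ a (m + 1 + k) := by
      intro k
      induction k with
      | zero => simpa using (h m).2.2.2.2
      | succ k ih =>
        have := h (m + 1 + k)
        have e1 : m + 1 + ((k + 1 : ℕ) : ℤ) = m + 1 + k + 1 := by push_cast; ring
        rw [e1]
        linarith [this.1, this.2.1, this.2.2.1, this.2.2.2.1, this.2.2.2.2]
    have := hst (n - (m + 1)).toNat
    rwa [Int.toNat_of_nonneg (by omega), add_sub_cancel] at this
  let F : ℤ × Bool → Matrix.SpecialLinearGroup (Fin 2) ℝ := fun i =>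
    if i.2 then ⟨TMat (a i.1) (b i.1) (c i.1) (d i.1), TMat_det _ _ _ _ (h i.1).1 (h i.1).2.2.1⟩
    else ⟨TMat (b i.1) (c i.1) (d i.1) (e i.1), TMat_det _ _ _ _ (h i.1).2.1 (h i.1).2.2.2.1⟩
  let lo := loF a b c d
  let hi := loF b c d e
  have hlh : ∀ s, lo s < hi s := by
    rintro ⟨⟨n, i⟩, j⟩
    obtain ⟨h1, h2, h3, h4, h5⟩ := h n
    cases i <;> cases j <;> simpa [lo, hi, loF]
  have hb : ∀ s : (ℤ × Bool) × Bool, a s.1.1 ≤ lo s ∧ hi s ≤ e s.1.1 := by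
    rintro ⟨⟨n, i⟩, j⟩
    obtain ⟨h1, h2, h3, h4, h5⟩ := h n
    cases i <;> cases j <;> simp only [lo, hi, loF] <;> constructor <;> linarith
  have hdisj : ∀ s t : (ℤ × Bool) × Bool, s ≠ t → hi s ≤ lo t ∨ hi t ≤ lo s := by
    intro s t hst
    rcases lt_trichotomy s.1.1 t.1.1 with hlt | heq | hlt
    · left; linarith [hmono _ _ hlt, (hb s).2, (hb t).1]
    · obtain ⟨⟨n, i⟩, j⟩ := s
      obtain ⟨⟨m, i'⟩, j'⟩ := t
      simp only at heq
      subst heq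
      obtain ⟨h1, h2, h3, h4, h5⟩ := h n
      cases i <;> cases j <;> cases i' <;> cases j' <;>
        first
        | exact absurd rfl hst
        | (left; simp only [lo, hi, loF]; linarith)
        | (right; simp only [lo, hi, loF]; linarith)
    · right; linarith [hmono _ _ hlt, (hb t).2, (hb s).1]
  have hF : ∀ s t : (ℤ × Bool) × Bool, (s.1 = t.1 → s.2 = t.2) →
      MapsR (cond s.2 (F s.1) (F s.1)⁻¹) (Set.Icc (lo t) (hi t)) (Set.Icc (lo s) (hi s)) := by
    intro s t hst
    have hne : t ≠ (s.1, !s.2) := by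
      rintro rfl
      simp at hst
    have hA : ∀ y ∈ Set.Icc (lo t) (hi t), y ≤ lo (s.1, !s.2) ∨ hi (s.1, !s.2) ≤ y := by
      intro y hy
      rcases hdisj _ _ hne with h' | h'
      · left; exact hy.2.trans h'
      · right; exact h'.trans hy.1
    obtain ⟨⟨n, i⟩, j⟩ := s
    obtain ⟨h1, h2, h3, h4, h5⟩ := h n
    cases i <;> cases j
    · exact T_maps_inv _ (b n) (c n) (d n) (e n) h2 h4 rfl _ hA
    · exact T_maps _ (b n) (c n) (d n) (e n) h2 h4 rfl _ hA
    · exact T_maps_inv _ (a n) (b n) (c n) (d n) h1 h3 rfl _ hA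
    · exact T_maps _ (a n) (b n) (c n) (d n) h1 h3 rfl _ hA
  intro γ hγ z hz
  have hle : γ ∈ (FreeGroup.lift F).range := by
    rw [FreeGroup.range_lift_eq_closure]
    refine Subgroup.closure_mono ?_ hγ
    rintro g ⟨n, hg | hg⟩
    · exact ⟨(n, true), Subtype.ext hg.symm⟩
    · exact ⟨(n, false), Subtype.ext hg.symm⟩
  obtain ⟨w, rfl⟩ := hle
  exact fix_of_trace _ (trace_lift F lo hi (fun s => (hlh s).le) hF w) z hz
end
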